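/- arXiv:cs/0210027 — 2 statements merged into one kernel-verified Lean document; each statement's English description precedes it below -/
import Mathlib

section
/- Let P be a propositional normal logic program. A two-valued model M ⊆ B_P of P is a stable model of P if and only if there exists a total level mapping l : B_P → α such that for every A ∈ M there exists a clause A ← A₁,…,Aₙ,¬B₁,…,¬Bₘ in P with Aᵢ ∈ M, Bⱼ ∉ M, and l(A) > l(Aᵢ) for all i = 1,…,n and j = 1,…,m. -/
namespace LP

/-- A literal over a set of propositional atoms: an atom or a negated atom. -/
inductive Lit (atom : Type) where
  | pos : atom → Lit atom
  | neg : atom → Lit atom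

/-- The underlying atom of a literal. -/
def Lit.atomOf {atom : Type} : Lit atom → atom
  | .pos a => a
  | .neg a => a

/-- A clause `head ← pos₁,…,posₙ, ¬neg₁,…,¬negₘ`. -/
structure Clause (atom : Type) where
  head : atom
  pos : Finset atom
  neg : Finset atom

variable {atom : Type}

/-- A (propositional) normal logic program: a set of clauses. -/
abbrev Program (atom : Type) := Set (Clause atom)

/-- Partial interpretations: sets of literals. -/
abbrev Interp (atom : Type) := Set (Lit atom)

def Consistent (I : Interp atom) : Prop := ∀ a : atom, ¬ (Lit.pos a ∈ I ∧ Lit.neg a ∈ I)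

def Total (I : Interp atom) : Prop := ∀ a : atom, Lit.pos a ∈ I ∨ Lit.neg a ∈ I

/-- An atom is defined (true or false, i.e. not undefined) in `I`. -/
def Defined (I : Interp atom) (A : atom) : Prop := Lit.pos A ∈ I ∨ Lit.neg A ∈ I

/-- Every body literal of the clause is true in `I`. -/
def BodyTrue (I : Interp atom) (C : Clause atom) : Prop :=
  (∀ a ∈ C.pos, Lit.pos a ∈ I) ∧ (∀ b ∈ C.neg, Lit.neg b ∈ I)

/-- Some body literal of the clause is false in `I`. -/
def BodyFalse (I : Interp atom) (C : Clause atom) : Prop :=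
  (∃ a ∈ C.pos, Lit.neg a ∈ I) ∨ (∃ b ∈ C.neg, Lit.pos b ∈ I)

/-- Three-valued model. -/
def Model3 (P : Program atom) (I : Interp atom) : Prop :=
  Consistent I ∧ ∀ C ∈ P,
    (BodyTrue I C → Lit.pos C.head ∈ I) ∧ (¬ BodyFalse I C → Lit.neg C.head ∉ I)

/-- Two-valued model. -/
def Model2 (P : Program atom) (M : Set atom) : Prop :=
  ∀ C ∈ P, (∀ a ∈ C.pos, a ∈ M) → (∀ b ∈ C.neg, b ∉ M) → C.head ∈ M

/-- A program is definite if no clause has negative body literals. -/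
def Definite (P : Program atom) : Prop := ∀ C ∈ P, C.neg = ∅

/-- The one-step operator `T_P⁺` for definite programs. -/
def Tplus (P : Program atom) (M : Set atom) : Set atom :=
  {A | ∃ C ∈ P, C.head = A ∧ C.neg = ∅ ∧ ∀ a ∈ C.pos, a ∈ M}

def TplusIter (P : Program atom) : ℕ → Set atom
  | 0 => ∅
  | n + 1 => Tplus P (TplusIter P n)

/-- `T_P⁺ ↑ ω`, the least two-valued model of a definite program. -/
def TplusOmega (P : Program atom) : Set atom := ⋃ n, TplusIter P n

/-- The Gelfond–Lifschitz reduct `P/M`. -/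
def GLreduct (P : Program atom) (M : Set atom) : Program atom :=
  {C' | ∃ C ∈ P, (∀ b ∈ C.neg, b ∉ M) ∧ C' = ⟨C.head, C.pos, ∅⟩}

/-- The Gelfond–Lifschitz operator. -/
def GLop (P : Program atom) (M : Set atom) : Set atom := TplusOmega (GLreduct P M)

/-- Stable model. -/
def Stable (P : Program atom) (M : Set atom) : Prop := GLop P M = M

def posLits (S : Set atom) : Interp atom := Lit.pos '' S
def negLits (S : Set atom) : Interp atom := Lit.neg '' S

/-- Three-valued immediate-consequence operator `T_P`. -/
def TP (P : Program atom) (I : Interp atom) : Set atom :=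
  {A | ∃ C ∈ P, C.head = A ∧ BodyTrue I C}

/-- `F_P`: atoms all of whose clauses have false bodies. -/
def FP (P : Program atom) (I : Interp atom) : Set atom :=
  {A | ∀ C ∈ P, C.head = A → BodyFalse I C}

/-- Fitting's operator `Φ_P`. -/
def Phi (P : Program atom) (I : Interp atom) : Interp atom :=
  posLits (TP P I) ∪ negLits (FP P I)

/-- Knaster–Tarski least (pre-)fixed point of an operator on sets. -/
def lfpSet {L : Type*} (F : Set L → Set L) : Set L := ⋂₀ {I | F I ⊆ I}

/-- Knaster–Tarski greatest (post-)fixed point of an operator on sets. -/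
def gfpSet {L : Type*} (F : Set L → Set L) : Set L := ⋃₀ {I | I ⊆ F I}

/-- The Fitting (Kripke–Kleene) model: least fixed point of `Φ_P`. -/
def FittingModel (P : Program atom) : Interp atom := lfpSet (Phi P)

/-- Transfinite iteration `F ↑ α` of an operator starting from `∅`. -/
noncomputable def iterOrd {L : Type*} (F : Set L → Set L) (α : Ordinal.{0}) : Set L :=
  Ordinal.limitRecOn α ∅ (fun _ ih => F ih) (fun o _ ih => ⋃ β, ⋃ h : β < o, ih β h)

/-- `U` is an unfounded set of `P` with respect to `I`. -/
def Unfounded (P : Program atom) (I : Interp atom) (U : Set atom) : Prop :=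
  ∀ A ∈ U, ∀ C ∈ P, C.head = A → BodyFalse I C ∨ ∃ a ∈ C.pos, a ∈ U

/-- The greatest unfounded set of `P` with respect to `I`. -/
def UP (P : Program atom) (I : Interp atom) : Set atom := ⋃₀ {U | Unfounded P I U}

/-- The van Gelder–Ross–Schlipf operator `W_P`. -/
def WP (P : Program atom) (I : Interp atom) : Interp atom :=
  posLits (TP P I) ∪ negLits (UP P I)

/-- The well-founded model: least fixed point of `W_P`. -/
def WFModel (P : Program atom) : Interp atom := lfpSet (WP P)

/-- `P` satisfies (F) with respect to `I` and the level mapping `l`. -/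
def CondF (P : Program atom) (I : Interp atom) (l : atom → Ordinal.{0}) : Prop :=
  ∀ A : atom, Defined I A →
    (Lit.pos A ∈ I ∧ ∃ C ∈ P, C.head = A ∧
        (∀ a ∈ C.pos, Lit.pos a ∈ I ∧ l a < l A) ∧
        (∀ b ∈ C.neg, Lit.neg b ∈ I ∧ l b < l A)) ∨
    (Lit.neg A ∈ I ∧ ∀ C ∈ P, C.head = A →
        (∃ a ∈ C.pos, Lit.neg a ∈ I ∧ l a < l A) ∨
        (∃ b ∈ C.neg, Lit.pos b ∈ I ∧ l b < l A))

/-- `P` satisfies (WF) with respect to `I` and the level mapping `l`. -/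
def CondWF (P : Program atom) (I : Interp atom) (l : atom → Ordinal.{0}) : Prop :=
  ∀ A : atom, Defined I A →
    (Lit.pos A ∈ I ∧ ∃ C ∈ P, C.head = A ∧
        (∀ a ∈ C.pos, Lit.pos a ∈ I ∧ l a < l A) ∧
        (∀ b ∈ C.neg, Lit.neg b ∈ I ∧ l b < l A)) ∨
    (Lit.neg A ∈ I ∧ ∀ C ∈ P, C.head = A →
        (∃ a ∈ C.pos, Lit.neg a ∈ I ∧ l a ≤ l A) ∨
        (∃ b ∈ C.neg, Lit.pos b ∈ I ∧ l b < l A))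

/-- `P` satisfies (WS) with respect to `I` and the level mapping `l`. -/
def CondWS (P : Program atom) (I : Interp atom) (l : atom → Ordinal.{0}) : Prop :=
  ∀ A : atom, Defined I A →
    (Lit.pos A ∈ I ∧ ∃ C ∈ P, C.head = A ∧
        (∀ a ∈ C.pos, Lit.pos a ∈ I ∧ l a < l A) ∧
        (∀ b ∈ C.neg, Lit.neg b ∈ I ∧ l b < l A)) ∨
    (Lit.neg A ∈ I ∧ ∀ C ∈ P, C.head = A →
        (∃ a ∈ C.pos, Lit.neg a ∈ I ∧ l a < l A) ∨
        ((∀ a ∈ C.pos, l a ≤ l A) ∧ (∀ b ∈ C.neg, l b < l A) ∧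
            ∃ a ∈ C.pos, Lit.neg a ∈ I) ∨
        (∃ b ∈ C.neg, Lit.pos b ∈ I ∧ l b < l A))

/-- `A` refers to `B`. -/
def RefersTo (P : Program atom) (A B : atom) : Prop :=
  ∃ C ∈ P, C.head = A ∧ (B ∈ C.pos ∨ B ∈ C.neg)

/-- `A` refers negatively to `B`. -/
def RefersNeg (P : Program atom) (A B : atom) : Prop :=
  ∃ C ∈ P, C.head = A ∧ B ∈ C.neg

/-- `DepOn P A B`: `A` depends on `B`, i.e. `B ≤ A`. -/
def DepOn (P : Program atom) : atom → atom → Prop := Relation.TransGen (RefersTo P)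

/-- `DepNeg P B A`: `B < A`, i.e. `A` depends negatively on `B`. -/
def DepNeg (P : Program atom) (B A : atom) : Prop :=
  ∃ C D, RefersNeg P C D ∧ (DepOn P A C ∨ C = A) ∧ (DepOn P D B ∨ B = D)

/-- `A ~ B`. -/
def Sim (P : Program atom) (A B : atom) : Prop :=
  A = B ∨ (DepNeg P A B ∧ DepNeg P B A)

/-- The components of `P`: equivalence classes of `~`. -/
def IsComponent (P : Program atom) (C : Set atom) : Prop :=
  ∃ A : atom, C = {B | Sim P A B}

/-- A trivial component: a singleton `{A}` with `A ≮ A`. -/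
def TrivialComponent (P : Program atom) (C : Set atom) : Prop :=
  ∃ A : atom, C = {A} ∧ ¬ DepNeg P A A

/-- The ordering `≺` on components. -/
def CompLt (P : Program atom) (C₁ C₂ : Set atom) : Prop :=
  C₁ ≠ C₂ ∧ ∀ A₁ ∈ C₁, ∃ A₂ ∈ C₂, DepNeg P A₁ A₂

def MinimalComponent (P : Program atom) (C : Set atom) : Prop :=
  IsComponent P C ∧ ¬ ∃ C₂, IsComponent P C₂ ∧ CompLt P C₂ C

/-- The bottom stratum `S(P)`: union of all minimal components. -/
def bottomStratum (P : Program atom) : Set atom :=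
  {A | ∃ C, MinimalComponent P C ∧ A ∈ C}

/-- The bottom layer `L(P)`: clauses with head in the bottom stratum. -/
def bottomLayer (P : Program atom) : Program atom :=
  {C ∈ P | C.head ∈ bottomStratum P}

/-- Delete from the body of `C` all literals true in `I`. -/
noncomputable def reduceClause (I : Interp atom) (C : Clause atom) : Clause atom :=
  letI : ∀ p : Prop, Decidable p := fun p => Classical.propDecidable p
  ⟨C.head, C.pos.filter (fun a => Lit.pos a ∉ I), C.neg.filter (fun b => Lit.neg b ∉ I)⟩

/-- Steps (1) and (2) of the reduct of `P` with respect to `I`. -/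
noncomputable def step12 (P : Program atom) (I : Interp atom) : Program atom :=
  {C' | ∃ C ∈ P, Lit.pos C.head ∉ I ∧ ¬ BodyFalse I C ∧ C' = reduceClause I C}

def IsUnitClause (C : Clause atom) : Prop := C.pos = ∅ ∧ C.neg = ∅

/-- The reduct `P/I` of Przymusinska–Przymusinski (steps (1)–(3)). -/
noncomputable def reduct (P : Program atom) (I : Interp atom) : Program atom :=
  {C ∈ step12 P I | IsUnitClause C ∨ ¬ ∃ C' ∈ step12 P I, C'.head = C.head ∧ IsUnitClause C'}

/-- The atoms occurring in `P`. -/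
def atomsOf (P : Program atom) : Set atom :=
  {A | ∃ C ∈ P, A = C.head ∨ A ∈ C.pos ∨ A ∈ C.neg}

/-- `R`: atoms undefined in `N` which are eliminated from `P` by reducing w.r.t. `N`. -/
noncomputable def Ratoms (P : Program atom) (N : Interp atom) : Set atom :=
  {A | A ∈ atomsOf P ∧ A ∉ atomsOf (reduct P N) ∧ ¬ Defined N A}

/-- The definite (partial) model of a definite program `Q`. -/
def defPartialModel (Q : Program atom) : Interp atom :=
  posLits (TplusOmega Q) ∪ negLits (atomsOf Q \ TplusOmega Q)

/-- The stopping condition of the weakly perfect model construction at `N`. -/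
noncomputable def stopCond (P : Program atom) (N : Interp atom) : Prop :=
  reduct P N = ∅ ∨ bottomStratum (reduct P N) = ∅ ∨
    ∃ C ∈ bottomLayer (reduct P N), C.neg ≠ ∅

/-- `M_α` computed from `N_α` (empty if the construction has stopped). -/
noncomputable def Mstep (P : Program atom) (N : Interp atom) : Interp atom :=
  letI : ∀ p : Prop, Decidable p := fun p => Classical.propDecidable p
  if stopCond P N then ∅
  else defPartialModel (bottomLayer (reduct P N)) ∪ negLits (Ratoms P N)

/-- `N_α = ⋃_{0<δ<α} M_δ` of the weakly perfect model construction. -/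
noncomputable def Nseq (P : Program atom) : Ordinal.{0} → Interp atom :=
  Ordinal.lt_wf.fix (C := fun _ => Interp atom)
    (fun α ih => ⋃ β : Ordinal.{0}, ⋃ h : β < α, Mstep P (ih β h))

/-- The stage at which the weakly perfect model construction stops. -/
noncomputable def wpStop (P : Program atom) : Ordinal.{0} :=
  sInf {α | stopCond P (Nseq P α)}

/-- The weakly perfect model `M_P = N_α ∪ ¬R_α` at the stopping stage `α`. -/
noncomputable def weaklyPerfectModel (P : Program atom) : Interp atom :=
  Nseq P (wpStop P) ∪ negLits (Ratoms P (Nseq P (wpStop P)))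

/-- Clause subsumption `C₁ ≼ C₂`. -/
def ClauseSub (C₁ C₂ : Clause atom) : Prop :=
  C₁.head = C₂.head ∧ C₁.pos ⊆ C₂.pos ∧ C₁.neg ⊆ C₂.neg

/-- `P'` subsumes `Q` model-consistently with respect to `I`: `P' ≼_I Q`. -/
def SubsumesMC (P' Q : Program atom) (I : Interp atom) : Prop :=
  (∀ C₁ ∈ P', ∃ C₂ ∈ Q, ClauseSub C₁ C₂ ∧
      (∀ a ∈ C₂.pos, a ∉ C₁.pos → Lit.pos a ∈ I) ∧
      (∀ b ∈ C₂.neg, b ∉ C₁.neg → Lit.neg b ∈ I)) ∧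
  (∀ C₂ ∈ Q, BodyTrue I C₂ → Lit.pos C₂.head ∉ I → ∃ C₁ ∈ P', ClauseSub C₁ C₂)

/-! Put `Q = P/M`. Being a model of `P` means that `M` is closed under `T_Q⁺`, and being
well-supported means that each `A ∈ M` is a one-step consequence of the atoms of `M` of lower level.
As clause bodies are finite, `T_Q⁺↑ω` is the least set closed under `T_Q⁺`; so it is contained in
`M` if `M` is a model, and it contains `M`, by induction on the level, if `M` is well-supported.
Conversely, the stage at which an atom enters the iteration is a level mapping supporting
`T_Q⁺↑ω`. -/

section DefiniteConsequences

variable {Q : Program atom} {M N : Set atom} {A : atom}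

theorem Tplus_mono (h : M ⊆ N) : Tplus Q M ⊆ Tplus Q N := by
  rintro A ⟨C, hC, hhead, hneg, hpos⟩
  exact ⟨C, hC, hhead, hneg, fun a ha => h (hpos a ha)⟩

theorem TplusIter_monotone (Q : Program atom) : Monotone (TplusIter Q) := by
  refine monotone_nat_of_le_succ fun n => ?_
  induction n with
  | zero => exact Set.empty_subset _
  | succ n ih => exact Tplus_mono ih

theorem TplusOmega_subset_of_Tplus_subset (h : Tplus Q M ⊆ M) : TplusOmega Q ⊆ M := by
  refine Set.iUnion_subset fun n => ?_
  induction n with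
  | zero => exact Set.empty_subset _
  | succ n ih => exact (Tplus_mono ih).trans h

theorem Tplus_TplusOmega_subset (Q : Program atom) : Tplus Q (TplusOmega Q) ⊆ TplusOmega Q := by
  rintro A ⟨C, hC, hhead, hneg, hpos⟩
  obtain ⟨n, hn⟩ : ∃ n, (C.pos : Set atom) ⊆ TplusIter Q n :=
    (TplusIter_monotone Q).directed_le.exists_mem_subset_of_finset_subset_biUnion hpos
  exact Set.mem_iUnion.2 ⟨n + 1, C, hC, hhead, hneg, fun a ha => hn ha⟩

theorem subset_of_Tplus_subset_of_forall_mem_Tplus_lt {α : Type*} [LT α] [WellFoundedLT α]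
    {l : atom → α} (hN : Tplus Q N ⊆ N) (hM : ∀ A ∈ M, A ∈ Tplus Q {a ∈ M | l a < l A}) :
    M ⊆ N := by
  intro A
  induction A using (InvImage.wf l wellFounded_lt).induction with
  | _ A ih =>
    intro hA
    have lower_subset : {a ∈ M | l a < l A} ⊆ N := fun a ha => ih a ha.2 ha.1
    exact hN (Tplus_mono lower_subset (hM A hA))

/-- The first stage of the iteration of `T_Q⁺` that contains `A`; it is `0` if `A` is not in
`T_Q⁺↑ω`. It is the level mapping supporting `T_Q⁺↑ω`. -/
noncomputable def firstStage (Q : Program atom) (A : atom) : ℕ :=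
  sInf {n | A ∈ TplusIter Q n}

theorem mem_TplusIter_firstStage (hA : A ∈ TplusOmega Q) : A ∈ TplusIter Q (firstStage Q A) :=
  Nat.sInf_mem (Set.mem_iUnion.1 hA)

theorem firstStage_le {n : ℕ} (hA : A ∈ TplusIter Q n) : firstStage Q A ≤ n :=
  Nat.sInf_le hA

theorem mem_Tplus_firstStage_lt (hA : A ∈ TplusOmega Q) :
    A ∈ Tplus Q {a ∈ TplusOmega Q | firstStage Q a < firstStage Q A} := by
  have hmem := mem_TplusIter_firstStage hA
  rcases hstage : firstStage Q A with _ | n <;> rw [hstage] at hmem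
  · exact hmem.elim
  · have iter_subset : TplusIter Q n ⊆ {a ∈ TplusOmega Q | firstStage Q a < n + 1} :=
      fun a ha => ⟨Set.mem_iUnion.2 ⟨n, ha⟩, Nat.lt_succ_of_le (firstStage_le ha)⟩
    exact Tplus_mono iter_subset hmem

end DefiniteConsequences

section WellSupported

variable {P : Program atom} {M N : Set atom} {A : atom} {α : Type*} [LT α] {l : atom → α}

theorem mem_Tplus_GLreduct :
    A ∈ Tplus (GLreduct P M) N ↔
      ∃ C ∈ P, C.head = A ∧ (∀ a ∈ C.pos, a ∈ N) ∧ ∀ b ∈ C.neg, b ∉ M := by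
  constructor
  · rintro ⟨_, ⟨C, hC, hneg, rfl⟩, hhead, -, hpos⟩
    exact ⟨C, hC, hhead, hpos, hneg⟩
  · rintro ⟨C, hC, hhead, hpos, hneg⟩
    exact ⟨_, ⟨C, hC, hneg, rfl⟩, hhead, rfl, hpos⟩

theorem model2_iff_Tplus_GLreduct_subset : Model2 P M ↔ Tplus (GLreduct P M) M ⊆ M := by
  constructor
  · intro hM A hA
    obtain ⟨C, hC, rfl, hpos, hneg⟩ := mem_Tplus_GLreduct.1 hA
    exact hM C hC hpos hneg
  · exact fun hM C hC hpos hneg => hM (mem_Tplus_GLreduct.2 ⟨C, hC, rfl, hpos, hneg⟩)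

/-- Fages' well-supportedness: every atom of `M` is the head of a clause of `P` whose body is true
in `M` and whose positive body atoms have lower level. Levels are taken in an arbitrary type with
`<`, so that both `ℕ` and the ordinals may serve. -/
def WellSupportedBy (P : Program atom) (M : Set atom) (l : atom → α) : Prop :=
  ∀ A ∈ M, ∃ C ∈ P, C.head = A ∧ (∀ a ∈ C.pos, a ∈ M ∧ l a < l A) ∧ ∀ b ∈ C.neg, b ∉ M

theorem wellSupportedBy_iff_forall_mem_Tplus_GLreduct :
    WellSupportedBy P M l ↔ ∀ A ∈ M, A ∈ Tplus (GLreduct P M) {a ∈ M | l a < l A} :=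
  forall₂_congr fun _ _ => mem_Tplus_GLreduct.symm

theorem WellSupportedBy.subset_GLop [WellFoundedLT α] (h : WellSupportedBy P M l) :
    M ⊆ GLop P M :=
  subset_of_Tplus_subset_of_forall_mem_Tplus_lt (Tplus_TplusOmega_subset _)
    (wellSupportedBy_iff_forall_mem_Tplus_GLreduct.1 h)

theorem WellSupportedBy.comp {β : Type*} [LT β] {f : α → β} (hf : ∀ ⦃x y⦄, x < y → f x < f y)
    (h : WellSupportedBy P M l) : WellSupportedBy P M (f ∘ l) := by
  intro A hA
  obtain ⟨C, hC, hhead, hpos, hneg⟩ := h A hA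
  exact ⟨C, hC, hhead, fun a ha => ⟨(hpos a ha).1, hf (hpos a ha).2⟩, hneg⟩

theorem Stable.wellSupportedBy_firstStage (h : Stable P M) :
    WellSupportedBy P M (firstStage (GLreduct P M)) := by
  have hM : TplusOmega (GLreduct P M) = M := h
  refine wellSupportedBy_iff_forall_mem_Tplus_GLreduct.2 fun A hA => ?_
  simpa only [hM] using mem_Tplus_firstStage_lt (hM.superset hA)

theorem Stable.model2 (h : Stable P M) : Model2 P M := by
  have hM : TplusOmega (GLreduct P M) = M := h
  simpa only [model2_iff_Tplus_GLreduct_subset, hM] using Tplus_TplusOmega_subset (GLreduct P M)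

theorem Model2.GLop_subset (h : Model2 P M) : GLop P M ⊆ M :=
  TplusOmega_subset_of_Tplus_subset (model2_iff_Tplus_GLreduct_subset.1 h)

end WellSupported

theorem stable_model_char_general (P : Program atom) (M : Set atom) :
    Stable P M ↔ Model2 P M ∧ ∃ l : atom → Ordinal.{0}, WellSupportedBy P M l := by
  constructor
  · intro hS
    exact ⟨hS.model2, _, hS.wellSupportedBy_firstStage.comp fun _ _ => Nat.cast_lt.2⟩
  · rintro ⟨hM, l, hl⟩
    exact hM.GLop_subset.antisymm hl.subset_GLop

/-- Fages: a two-valued model is stable iff it is supported by a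
total level mapping. -/
theorem stable_model_char {atom : Type} [Countable atom]
    (P : Program atom) (M : Set atom) (hM : Model2 P M) :
    Stable P M ↔ ∃ l : atom → Ordinal.{0}, ∀ A ∈ M, ∃ C ∈ P, C.head = A ∧
      (∀ a ∈ C.pos, a ∈ M ∧ l a < l A) ∧ (∀ b ∈ C.neg, b ∉ M) :=
  (stable_model_char_general P M).trans (and_iff_right hM)

end LP
end

section
/- Let P be a propositional normal logic program, let M_P be its Fitting model, and define the M_P-partial level mapping l_P by l_P(A) = the least ordinal α such that A is not undefined in Φ_P↑(α+1). Then P satisfies (F) with respect to M_P and l_P. -/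
namespace LP

variable {atom : Type}

/-!
Nothing new appears at limit stages, so a literal of `Φ_P↑β` already lies in some `Φ_P↑(δ + 1)`
with `δ < β`; hence every atom defined in `Φ_P↑β` has level less than `β`. An atom `A` of the
Fitting model with level `β` is decided in `Φ_P↑(β + 1) = Φ_P(Φ_P↑β)`, and the body literals that
witness this decision belong to `Φ_P↑β`, so their levels are below `β`.
-/

section TransfiniteIteration

variable {L : Type*} (F : Set L → Set L)

theorem iterOrd_zero : iterOrd F 0 = ∅ :=
  Ordinal.limitRecOn_zero _ _ _

theorem iterOrd_add_one (α : Ordinal.{0}) : iterOrd F (α + 1) = F (iterOrd F α) :=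
  Ordinal.limitRecOn_add_one _ _ _ _

theorem iterOrd_of_isSuccLimit {α : Ordinal.{0}} (hα : Order.IsSuccLimit α) :
    iterOrd F α = ⋃ β, ⋃ _ : β < α, iterOrd F β :=
  Ordinal.limitRecOn_limit _ _ _ _ hα

variable {F}

theorem exists_lt_mem_iterOrd_add_one {x : L} {β : Ordinal.{0}} (hx : x ∈ iterOrd F β) :
    ∃ δ < β, x ∈ iterOrd F (δ + 1) := by
  induction β using Ordinal.limitRecOn with
  | zero => simp [iterOrd_zero] at hx
  | add_one δ => exact ⟨δ, lt_add_one δ, hx⟩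
  | limit β hβ ih =>
    simp only [iterOrd_of_isSuccLimit F hβ, Set.mem_iUnion] at hx
    obtain ⟨γ, hγβ, hxγ⟩ := hx
    obtain ⟨δ, hδγ, hxδ⟩ := ih γ hγβ hxγ
    exact ⟨δ, hδγ.trans hγβ, hxδ⟩

end TransfiniteIteration

section LeastFixedPoint

variable {L : Type} (F : Set L →o Set L)

theorem iterOrd_eq_lfpApprox (α : Ordinal.{0}) :
    iterOrd F α = OrdinalApprox.lfpApprox F ⊥ α := by
  induction α using Ordinal.limitRecOn with
  | zero => rw [iterOrd_zero, OrdinalApprox.lfpApprox_zero, Set.bot_eq_empty]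
  | add_one α ih => rw [iterOrd_add_one, OrdinalApprox.lfpApprox_add_one F bot_le, ih]
  | limit α hα ih =>
    rw [iterOrd_of_isSuccLimit F hα, OrdinalApprox.lfpApprox_of_isSuccLimit F hα,
      Set.iUnion₂_congr ih]
    exact iSup_subtype'

theorem iterOrd_subset_lfpSet (α : Ordinal.{0}) : iterOrd F α ⊆ lfpSet F := by
  rw [iterOrd_eq_lfpApprox]
  exact OrdinalApprox.lfpApprox_le_of_mem_fixedPoints F F.isFixedPt_lfp bot_le α

theorem exists_iterOrd_eq_lfpSet : ∃ α : Ordinal.{0}, iterOrd F α = lfpSet F := by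
  obtain ⟨α, hα⟩ := OrdinalApprox.lfp_mem_range_lfpApprox F
  exact ⟨α, (iterOrd_eq_lfpApprox F α).trans hα⟩

theorem exists_iterOrd_add_one_eq_lfpSet : ∃ α : Ordinal.{0}, iterOrd F (α + 1) = lfpSet F := by
  obtain ⟨α, hα⟩ := exists_iterOrd_eq_lfpSet F
  exact ⟨α, by rw [iterOrd_add_one, hα]; exact F.map_lfp⟩

end LeastFixedPoint

section FittingOperator

variable {P : Program atom} {I J : Interp atom} {A : atom} {C : Clause atom}

theorem defined_atomOf_of_mem {l : Lit atom} (hl : l ∈ I) : Defined I l.atomOf := by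
  cases l with
  | pos _ => exact Or.inl hl
  | neg _ => exact Or.inr hl

theorem BodyTrue.mono (hIJ : I ⊆ J) (hC : BodyTrue I C) : BodyTrue J C :=
  ⟨fun a ha => hIJ (hC.1 a ha), fun b hb => hIJ (hC.2 b hb)⟩

theorem BodyFalse.mono (hIJ : I ⊆ J) (hC : BodyFalse I C) : BodyFalse J C :=
  hC.imp (fun ⟨a, ha, haI⟩ => ⟨a, ha, hIJ haI⟩) (fun ⟨b, hb, hbI⟩ => ⟨b, hb, hIJ hbI⟩)

theorem pos_mem_Phi : Lit.pos A ∈ Phi P I ↔ ∃ C ∈ P, C.head = A ∧ BodyTrue I C := by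
  simp [Phi, posLits, negLits, TP]

theorem neg_mem_Phi : Lit.neg A ∈ Phi P I ↔ ∀ C ∈ P, C.head = A → BodyFalse I C := by
  simp [Phi, posLits, negLits, FP]

theorem Phi_monotone (P : Program atom) : Monotone (Phi P) := by
  rintro I J hIJ (A | A) hA
  · obtain ⟨C, hC, hhead, hbody⟩ := pos_mem_Phi.1 hA
    exact pos_mem_Phi.2 ⟨C, hC, hhead, hbody.mono hIJ⟩
  · exact neg_mem_Phi.2 fun C hC hhead => (neg_mem_Phi.1 hA C hC hhead).mono hIJ

end FittingOperator

/-- The level mapping `l_P` of the Fitting model: the least `α` such that `A` is defined in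
`Φ_P↑(α + 1)`. It is total, with the junk value `0` at atoms undefined in the Fitting model. -/
noncomputable def fittingLevel (P : Program atom) (A : atom) : Ordinal.{0} :=
  sInf {α : Ordinal.{0} | Defined (iterOrd (Phi P) (α + 1)) A}

theorem fittingLevel_atomOf_lt_of_mem_iterOrd {P : Program atom} {l : Lit atom} {β : Ordinal.{0}}
    (hl : l ∈ iterOrd (Phi P) β) : fittingLevel P l.atomOf < β := by
  obtain ⟨δ, hδβ, hlδ⟩ := exists_lt_mem_iterOrd_add_one hl
  have hle : fittingLevel P l.atomOf ≤ δ :=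
    csInf_le' (Set.mem_ofPred.2 (defined_atomOf_of_mem hlδ))
  exact hle.trans_lt hδβ

theorem defined_iterOrd_fittingLevel_add_one {P : Program atom} {A : atom}
    (hA : Defined (FittingModel P) A) :
    Defined (iterOrd (Phi P) (fittingLevel P A + 1)) A := by
  obtain ⟨γ, hγ⟩ : ∃ γ : Ordinal.{0}, iterOrd (Phi P) (γ + 1) = FittingModel P :=
    exists_iterOrd_add_one_eq_lfpSet ⟨Phi P, Phi_monotone P⟩
  rw [← hγ] at hA
  exact csInf_mem (s := {α | Defined (iterOrd (Phi P) (α + 1)) A}) ⟨γ, hA⟩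

theorem fitting_levels_satisfy_F_general (P : Program atom) :
    CondF P (FittingModel P) (fittingLevel P) := by
  intro A hA
  have hmodel : ∀ α, iterOrd (Phi P) α ⊆ FittingModel P :=
    iterOrd_subset_lfpSet ⟨Phi P, Phi_monotone P⟩
  have hlower : ∀ l ∈ iterOrd (Phi P) (fittingLevel P A),
      l ∈ FittingModel P ∧ fittingLevel P l.atomOf < fittingLevel P A :=
    fun l hl => ⟨hmodel _ hl, fittingLevel_atomOf_lt_of_mem_iterOrd hl⟩
  rcases defined_iterOrd_fittingLevel_add_one hA with hpos | hneg
  · refine Or.inl ⟨hmodel _ hpos, ?_⟩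
    rw [iterOrd_add_one, pos_mem_Phi] at hpos
    obtain ⟨C, hC, hhead, hbodyPos, hbodyNeg⟩ := hpos
    exact ⟨C, hC, hhead, fun a ha => hlower _ (hbodyPos a ha), fun b hb => hlower _ (hbodyNeg b hb)⟩
  · refine Or.inr ⟨hmodel _ hneg, fun C hC hhead => ?_⟩
    rw [iterOrd_add_one, neg_mem_Phi] at hneg
    exact (hneg C hC hhead).imp
      (fun ⟨a, ha, hfalse⟩ => ⟨a, ha, hlower _ hfalse⟩)
      (fun ⟨b, hb, htrue⟩ => ⟨b, hb, hlower _ htrue⟩)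

/-- `P` satisfies (F) w.r.t. its Fitting model and the level mapping
`l_P(A) = least α such that A is not undefined in Φ_P↑(α+1)`. -/
theorem fitting_levels_satisfy_F {atom : Type} [Countable atom] (P : Program atom) :
    CondF P (FittingModel P)
      (fun A => sInf {α : Ordinal.{0} | Defined (iterOrd (Phi P) (α + 1)) A}) :=
  fitting_levels_satisfy_F_general P

end LP
end
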